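/- arXiv:0802.2581 — 9 statements merged into one kernel-verified Lean document; each statement's English description precedes it below -/
import Mathlib

section
/- Let K be a symmetric positive definite real matrix indexed by a finite set Δ, let δ ∈ Δ, and set Q1 := Δ \ {δ}. If i, j ∈ Q1 satisfy k_{ij} = 0 and additionally k_{iδ} = 0 or k_{jδ} = 0, then the (i, j) entry of ((K^{-1})_{Q1Q1})^{-1} is 0. (Consequently, eliminating a simplicial vertex of a graph preserves the zero pattern of the graphical model on the remaining vertices.) -/
open Matrix

/-- The `Δ1 × Δ2` submatrix of a matrix `A` indexed by `Δ`. -/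
def msub {Δ : Type*} (A : Matrix Δ Δ ℝ) (Δ1 Δ2 : Finset Δ) : Matrix Δ1 Δ2 ℝ :=
  A.submatrix (fun i => (i : Δ)) (fun j => (j : Δ))

theorem stmt_4 {Δ : Type*} [Fintype Δ] [DecidableEq Δ]
    (K : Matrix Δ Δ ℝ) (hsymm : K.IsSymm) (hK : K.PosDef)
    (δ : Δ) (Q1 : Finset Δ) (hQ1 : Q1 = Finset.univ.erase δ)
    (i j : Δ) (hi : i ∈ Q1) (hj : j ∈ Q1)
    (hij : K i j = 0) (hδ : K i δ = 0 ∨ K j δ = 0) :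
    ((msub K⁻¹ Q1 Q1)⁻¹) ⟨i, hi⟩ ⟨j, hj⟩ = 0 := by
  subst hQ1
  have hd : K δ δ ≠ 0 := (hK.diag_pos (i := δ)).ne'
  have hKL : K * K⁻¹ = 1 :=
    Matrix.mul_nonsing_inv K ((Matrix.isUnit_iff_isUnit_det K).1 hK.isUnit)
  have hentry : ∀ a c : Δ, ∑ b, K a b * K⁻¹ b c = if a = c then 1 else 0 := by
    intro a c
    have h := congrFun (congrFun hKL a) c
    rwa [Matrix.mul_apply, Matrix.one_apply] at h
  have hinv : (msub K⁻¹ (Finset.univ.erase δ) (Finset.univ.erase δ))⁻¹ =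
      Matrix.of (fun a b : { x // x ∈ Finset.univ.erase δ } => K a b - K a δ / K δ δ * K δ b) := by
    apply Matrix.inv_eq_left_inv
    ext ⟨a, ha⟩ ⟨c, hc⟩
    have hcδ : c ≠ δ := Finset.ne_of_mem_erase hc
    rw [Matrix.mul_apply, Matrix.one_apply]
    simp only [msub, Matrix.of_apply, Matrix.submatrix_apply, Subtype.mk.injEq]
    rw [Finset.sum_coe_sort (Finset.univ.erase δ)
      (fun b => (K a b - K a δ / K δ δ * K δ b) * K⁻¹ b c)]
    rw [Finset.sum_erase _ (by
      have : K a δ - K a δ / K δ δ * K δ δ = 0 := by field_simp; ring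
      rw [this, zero_mul])]
    simp only [sub_mul, Finset.sum_sub_distrib, mul_assoc, ← Finset.mul_sum]
    rw [hentry, hentry, if_neg hcδ.symm]
    simp
  rw [hinv]
  have hs : K δ j = K j δ := hsymm.apply j δ
  simp only [Matrix.of_apply, hij, hs]
  rcases hδ with h | h <;> simp [h]
end

section
/- Let K be a symmetric positive definite real matrix indexed by a finite set Δ, and let C ⊆ Q1 ⊆ Δ with C nonempty. Set M := ((K^{-1})_{Q1Q1})^{-1}, which is a symmetric positive definite matrix indexed by Q1. Then ((M^{-1})_{CC})^{-1} = ((K^{-1})_{CC})^{-1}; that is, taking the inverse of the C-marginal of the inverse can be computed in two stages through any intermediate index set Q1. -/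
open Matrix

theorem stmt_5 {Δ : Type*} [Fintype Δ] [DecidableEq Δ]
    (K : Matrix Δ Δ ℝ) (hsymm : K.IsSymm) (hK : K.PosDef)
    (C Q1 : Finset Δ) (hCQ : C ⊆ Q1) (hC : C.Nonempty)
    (M : Matrix Q1 Q1 ℝ) (hM : M = (msub K⁻¹ Q1 Q1)⁻¹) :
    M.IsSymm ∧ M.PosDef ∧
    ((M⁻¹).submatrix (fun i : C => (⟨↑i, hCQ i.2⟩ : Q1)) (fun j : C => (⟨↑j, hCQ j.2⟩ : Q1)))⁻¹
      = (msub K⁻¹ C C)⁻¹ := by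
  have hN : (msub K⁻¹ Q1 Q1).PosDef := hK.inv.submatrix Subtype.val_injective
  have hP : M.PosDef := hM ▸ hN.inv
  refine ⟨?_, hP, ?_⟩
  · have h := hP.isHermitian
    rwa [Matrix.IsHermitian, Matrix.conjTranspose_eq_transpose_of_trivial] at h
  · have hu : IsUnit (msub K⁻¹ Q1 Q1).det := isUnit_iff_ne_zero.mpr hN.det_pos.ne'
    rw [hM, Matrix.nonsing_inv_nonsing_inv _ hu]
    rfl
end

section
/- Let K be a symmetric positive definite real matrix indexed by a finite set Δ, let C be a nonempty proper subset of Δ, and let δ_1, …, δ_p be any enumeration of Δ \ C. Define a sequence of matrices by K^{(0)} := K and, for l = 1, …, p, K^{(l)} := (K^{(l-1)})_{Q_l Q_l} − ((K^{(l-1)})_{δ_l δ_l})^{-1} (K^{(l-1)})_{Q_l δ_l} (K^{(l-1)})_{δ_l Q_l}, where Q_l is the index set of K^{(l-1)} with δ_l removed. Then each K^{(l)} is symmetric positive definite and the final matrix satisfies K^{(p)} = ((K^{-1})_{CC})^{-1}. (This is the correctness of the localized elimination algorithm: successive single-vertex Schur-complement eliminations of all vertices outside C, in any order, produce the inverse of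 the C-marginal of K^{-1}.) -/
open Matrix

theorem aux_sum_erase {Δ : Type*} [DecidableEq Δ] (Q P : Finset Δ) (d : Δ) (hd : d ∈ Q)
    (hP : P = Q.erase d) (hsub : ∀ x ∈ P, x ∈ Q) (g : Q → ℝ) :
    ∑ j : Q, g j = g ⟨d, hd⟩ + ∑ j : P, g ⟨j.1, hsub j.1 j.2⟩ := by
  have h1 : ∑ j : Q, g j = ∑ j ∈ Q, (fun x => if h : x ∈ Q then g ⟨x, h⟩ else 0) j := by
    rw [← Finset.sum_coe_sort Q]
    exact Finset.sum_congr rfl fun j _ => by simp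
  have h2 : ∑ j : P, g ⟨j.1, hsub j.1 j.2⟩ =
      ∑ j ∈ P, (fun x => if h : x ∈ Q then g ⟨x, h⟩ else 0) j := by
    rw [← Finset.sum_coe_sort P]
    refine Finset.sum_congr rfl fun j _ => ?_
    have := hsub j.1 j.2
    simp [this]
  rw [h1, h2, hP, ← Finset.add_sum_erase Q _ hd]
  simp [hd]

theorem aux_step {Δ : Type*} [DecidableEq Δ] (Q P : Finset Δ) (d : Δ) (hd : d ∈ Q)
    (hP : P = Q.erase d) (hsub : ∀ x ∈ P, x ∈ Q) (S : Matrix Δ Δ ℝ)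
    (A : Matrix Q Q ℝ) (B : Matrix P P ℝ) (hA : A * msub S Q Q = 1)
    (hne : A ⟨d, hd⟩ ⟨d, hd⟩ ≠ 0)
    (hB : ∀ i j : P, B i j = A ⟨i.1, hsub i.1 i.2⟩ ⟨j.1, hsub j.1 j.2⟩ -
      (A ⟨d, hd⟩ ⟨d, hd⟩)⁻¹ * (A ⟨i.1, hsub i.1 i.2⟩ ⟨d, hd⟩ *
        A ⟨d, hd⟩ ⟨j.1, hsub j.1 j.2⟩)) :
    B * msub S P P = 1 := by
  ext i k
  have key : ∀ a : Q, A a ⟨d, hd⟩ * S d k.1 +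
      ∑ j : P, A a ⟨j.1, hsub j.1 j.2⟩ * S j.1 k.1 = if a.1 = k.1 then 1 else 0 := by
    intro a
    have h := congrFun (congrFun hA a) ⟨k.1, hsub k.1 k.2⟩
    rw [Matrix.mul_apply, aux_sum_erase Q P d hd hP hsub] at h
    simpa [msub, Matrix.one_apply, Subtype.ext_iff] using h
  have hk : d ≠ k.1 := by
    have h : k.1 ∈ Q.erase d := hP ▸ k.2
    exact (Finset.ne_of_mem_erase h).symm
  have k1 := key ⟨i.1, hsub i.1 i.2⟩
  have k2 := key ⟨d, hd⟩
  simp only [hk, if_false] at k2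
  have : (B * msub S P P) i k = ∑ j : P, A ⟨i.1, hsub i.1 i.2⟩ ⟨j.1, hsub j.1 j.2⟩ * S j.1 k.1 -
      (A ⟨d, hd⟩ ⟨d, hd⟩)⁻¹ * A ⟨i.1, hsub i.1 i.2⟩ ⟨d, hd⟩ *
        ∑ j : P, A ⟨d, hd⟩ ⟨j.1, hsub j.1 j.2⟩ * S j.1 k.1 := by
    rw [Matrix.mul_apply, Finset.mul_sum, ← Finset.sum_sub_distrib]
    refine Finset.sum_congr rfl fun j _ => ?_
    rw [hB]
    simp only [msub, Matrix.submatrix_apply]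
    ring
  have e2 := eq_neg_of_add_eq_zero_right k2
  have e1 := eq_sub_of_add_eq' k1
  rw [this, e2, e1, Matrix.one_apply]
  simp only [Subtype.ext_iff]
  field_simp
  ring

theorem aux_posDef {Δ : Type*} [Fintype Δ] [DecidableEq Δ] (K : Matrix Δ Δ ℝ) (hK : K.PosDef)
    (Q : Finset Δ) (A : Matrix Q Q ℝ) (hA : A * msub K⁻¹ Q Q = 1) : A.PosDef := by
  have h : (msub K⁻¹ Q Q).PosDef := hK.inv.submatrix Subtype.val_injective
  rw [← Matrix.inv_eq_left_inv hA]
  exact h.inv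

/-- Correctness of the localized elimination algorithm: successively eliminating,
by single-vertex Schur complements, all vertices outside `C` (in any order
`δ 0, …, δ (p-1)` enumerating `Δ \ C`) from a symmetric positive definite matrix `K`
keeps every intermediate matrix symmetric positive definite and finally produces
`((K⁻¹)_{CC})⁻¹`. -/
theorem stmt_6 {Δ : Type*} [Fintype Δ] [DecidableEq Δ]
    (K : Matrix Δ Δ ℝ) (hsymm : K.IsSymm) (hK : K.PosDef)
    (C : Finset Δ) (hC : C.Nonempty) (hCproper : C ≠ Finset.univ)
    (p : ℕ) (δ : Fin p → Δ) (hinj : Function.Injective δ)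
    (himg : Finset.image δ Finset.univ = Finset.univ \ C)
    -- the shrinking index sets `Q 0 = Δ`, `Q (l+1) = Q l \ {δ l}`
    (Q : Fin (p + 1) → Finset Δ)
    (hQ0 : Q 0 = Finset.univ)
    (hQsucc : ∀ l : Fin p, Q l.succ = (Q l.castSucc).erase (δ l))
    -- the sequence of matrices `Kseq 0 = K`, each `Kseq (l+1)` being the
    -- single-vertex Schur-complement elimination of `δ l` from `Kseq l`
    (Kseq : ∀ l : Fin (p + 1), Matrix (Q l) (Q l) ℝ)
    (hK0 : ∀ i j : Q 0, Kseq 0 i j = K ↑i ↑j)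
    (hstep : ∀ (l : Fin p) (i j : Q l.succ)
      (hi : ↑i ∈ Q l.castSucc) (hj : ↑j ∈ Q l.castSucc) (hd : δ l ∈ Q l.castSucc),
      Kseq l.succ i j =
        Kseq l.castSucc ⟨↑i, hi⟩ ⟨↑j, hj⟩ -
          (Kseq l.castSucc ⟨δ l, hd⟩ ⟨δ l, hd⟩)⁻¹ *
            (Kseq l.castSucc ⟨↑i, hi⟩ ⟨δ l, hd⟩ * Kseq l.castSucc ⟨δ l, hd⟩ ⟨↑j, hj⟩)) :
    (∀ l : Fin (p + 1), (Kseq l).IsSymm ∧ (Kseq l).PosDef) ∧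
    Q (Fin.last p) = C ∧
    (∀ (i j : Q (Fin.last p)) (hi : ↑i ∈ C) (hj : ↑j ∈ C),
      Kseq (Fin.last p) i j = ((msub K⁻¹ C C)⁻¹) ⟨↑i, hi⟩ ⟨↑j, hj⟩) := by
  have hmem : ∀ l : Fin (p + 1), ∀ x, x ∈ Q l ↔ ∀ i : Fin p, i.castSucc < l → δ i ≠ x := by
    intro l
    induction l using Fin.induction with
    | zero => intro x; simp [hQ0]
    | succ l ih =>
      intro x
      rw [hQsucc, Finset.mem_erase, ih]
      constructor
      · rintro ⟨h1, h2⟩ i hi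
        rcases eq_or_ne i l with rfl | hne
        · exact h1.symm
        · refine h2 i ?_
          simp only [Fin.lt_def, Fin.val_castSucc, Fin.val_succ, ne_eq, Fin.ext_iff] at *
          omega
      · intro h
        refine ⟨(h l (by simp [Fin.lt_def])).symm, fun i hi => h i ?_⟩
        simp only [Fin.lt_def, Fin.val_castSucc, Fin.val_succ] at *
        omega
  have hinv : ∀ l : Fin (p + 1), Kseq l * msub K⁻¹ (Q l) (Q l) = 1 := by
    intro l
    induction l using Fin.induction with
    | zero =>
      have hKK : K * K⁻¹ = 1 := Matrix.mul_nonsing_inv K (hK.isUnit.map Matrix.detMonoidHom)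
      ext i k
      have h := congrFun (congrFun hKK i.1) k.1
      rw [Matrix.mul_apply, ← hQ0, ← Finset.sum_coe_sort (Q 0)] at h
      rw [Matrix.mul_apply]
      simp only [msub, Matrix.submatrix_apply, hK0]
      rw [h]
      simp only [Matrix.one_apply, Subtype.ext_iff]
    | succ l ih =>
      have hd : δ l ∈ Q l.castSucc := by
        rw [hmem]
        intro i hi h
        have := hinj h
        subst this
        exact lt_irrefl _ hi
      have hsub : ∀ x ∈ Q l.succ, x ∈ Q l.castSucc := by
        intro x hx
        rw [hQsucc] at hx
        exact Finset.mem_of_mem_erase hx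
      have hpd := aux_posDef K hK _ _ ih
      exact aux_step _ _ (δ l) hd (hQsucc l) hsub K⁻¹ _ _ ih hpd.diag_pos.ne'
        fun i j => hstep l i j _ _ _
  have hlast : Q (Fin.last p) = C := by
    ext x
    have h := congrArg (x ∈ ·) himg
    simp only [Finset.mem_image, Finset.mem_univ, true_and, Finset.mem_sdiff, eq_iff_iff] at h
    rw [hmem]
    have : (∀ i : Fin p, i.castSucc < Fin.last p → δ i ≠ x) ↔ ¬ ∃ i, δ i = x := by
      simp [Fin.castSucc_lt_last]
    rw [this, h, not_not]
  refine ⟨fun l => ?_, hlast, ?_⟩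
  · have hpd := aux_posDef K hK _ _ (hinv l)
    refine ⟨?_, hpd⟩
    have := hpd.isHermitian
    rwa [Matrix.IsHermitian, Matrix.conjTranspose_eq_transpose_of_trivial] at this
  · have h := Matrix.inv_eq_left_inv (hinv (Fin.last p))
    generalize Kseq (Fin.last p) = A at h
    generalize Q (Fin.last p) = R at hlast A h
    subst hlast
    intro i j hi hj
    rw [h]
end

section
/- Let Δ be a finite index set partitioned into disjoint nonempty subsets C and D, let K be a symmetric positive definite real matrix indexed by Δ, and let W_{CC} be a symmetric positive definite matrix indexed by C. Define K' to be the symmetric matrix indexed by Δ with blocks (K')_{CC} = (W_{CC})^{-1} + K_{CD} (K_{DD})^{-1} K_{DC}, (K')_{CD} = K_{CD}, (K')_{DC} = K_{DC}, and (K')_{DD} = K_{DD}. Then K' is positive definite and ((K')^{-1})_{CC} = W_{CC}; that is, one step of the iterative proportional scaling update adjusts the C-marginal of the inverse to equal W_{CC}. -/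
open Matrix

lemma aux_block {m n : Type*} [Fintype m] [Fintype n] [DecidableEq m] [DecidableEq n]
    (W : Matrix m m ℝ) (B : Matrix m n ℝ) (D : Matrix n n ℝ) (hW : W.PosDef) (hD : D.PosDef) :
    (fromBlocks (W⁻¹ + B * D⁻¹ * Bᴴ) B Bᴴ D).PosDef ∧
      ((fromBlocks (W⁻¹ + B * D⁻¹ * Bᴴ) B Bᴴ D)⁻¹).toBlocks₁₁ = W := by
  have hWi := hW.inv
  letI : Invertible D := hD.isUnit.invertible
  have hS : W⁻¹ + B * D⁻¹ * Bᴴ - B * ⅟D * Bᴴ = W⁻¹ := by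
    rw [invOf_eq_nonsing_inv]; abel
  have hu : IsUnit (fromBlocks (W⁻¹ + B * D⁻¹ * Bᴴ) B Bᴴ D) := by
    rw [isUnit_fromBlocks_iff_of_invertible₂₂, hS]
    exact hWi.isUnit
  constructor
  · have hp : (fromBlocks (W⁻¹ + B * D⁻¹ * Bᴴ) B Bᴴ D).PosSemidef := by
      rw [PosDef.fromBlocks₂₂ _ _ hD, add_sub_cancel_right]
      exact hWi.posSemidef
    exact hp.posDef_iff_isUnit.2 hu
  · letI := hu.invertible
    letI : Invertible (W⁻¹ + B * D⁻¹ * Bᴴ - B * ⅟D * Bᴴ) := by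
      rw [hS]; exact hWi.isUnit.invertible
    rw [← invOf_eq_nonsing_inv, invOf_fromBlocks₂₂_eq, toBlocks_fromBlocks₁₁,
      invOf_eq_nonsing_inv, hS, nonsing_inv_nonsing_inv]
    exact (isUnit_iff_isUnit_det _).1 hW.isUnit



/-- One step of the iterative proportional scaling update adjusts the `C`-marginal
of the inverse to equal `W_{CC}` and keeps the matrix positive definite. -/
theorem stmt_7 {Δ : Type*} [Fintype Δ] [DecidableEq Δ]
    (C D : Finset Δ) (hdisj : Disjoint C D) (hunion : C ∪ D = Finset.univ)
    (hC : C.Nonempty) (hD : D.Nonempty)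
    (K : Matrix Δ Δ ℝ) (hsymm : K.IsSymm) (hK : K.PosDef)
    (W : Matrix C C ℝ) (hWsymm : W.IsSymm) (hW : W.PosDef)
    (K' : Matrix Δ Δ ℝ) (hK'symm : K'.IsSymm)
    (hCC : ∀ i j : C, K' ↑i ↑j = (W⁻¹ + msub K C D * (msub K D D)⁻¹ * msub K D C) i j)
    (hout : ∀ i j : Δ, ¬(i ∈ C ∧ j ∈ C) → K' i j = K i j) :
    K'.PosDef ∧ msub K'⁻¹ C C = W := by

  have hd : ∀ d ∈ D, d ∉ C := fun d h1 h2 => (Finset.disjoint_left.1 hdisj h2) h1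
  let f : C ⊕ D → Δ := Sum.elim (fun i => (i : Δ)) (fun j => (j : Δ))
  have hf : Function.Bijective f := by
    constructor
    · rintro (⟨a, ha⟩ | ⟨a, ha⟩) (⟨b, hb⟩ | ⟨b, hb⟩) h
      · simpa [f] using h
      · exact absurd ((show a = b from h) ▸ ha) (hd b hb)
      · exact absurd ((show a = b from h) ▸ hb) (hd a ha)
      · simpa [f] using h
    · intro x
      have hx : x ∈ C ∪ D := hunion ▸ Finset.mem_univ x
      rcases Finset.mem_union.1 hx with h | h
      · exact ⟨Sum.inl ⟨x, h⟩, rfl⟩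
      · exact ⟨Sum.inr ⟨x, h⟩, rfl⟩
  let e : C ⊕ D ≃ Δ := Equiv.ofBijective f hf
  have hDD : (msub K D D).PosDef := hK.submatrix Subtype.val_injective
  have hT : msub K D C = (msub K C D)ᴴ := by
    ext i j
    simp [msub, hsymm.apply]
  have hM : K'.submatrix e e = fromBlocks (W⁻¹ + msub K C D * (msub K D D)⁻¹ * (msub K C D)ᴴ)
      (msub K C D) (msub K C D)ᴴ (msub K D D) := by
    rw [← hT]
    ext (i | i) (j | j)
    · exact hCC i j
    · exact hout i j (fun h => hd j j.2 h.2)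
    · exact hout i j (fun h => hd i i.2 h.1)
    · exact hout i j (fun h => hd i i.2 h.1)
  obtain ⟨h1, h2⟩ := aux_block W (msub K C D) (msub K D D) hW hDD
  rw [← hM] at h1 h2
  constructor
  · have := h1.submatrix e.symm.injective
    simpa using this
  · rw [inv_submatrix_equiv] at h2
    exact h2
end

section
/- Let Δ be a finite index set partitioned into disjoint nonempty subsets A, B, and S, and let K be a symmetric positive definite real matrix indexed by Δ with K_{AB} = 0. Set V := A ∪ S and V' := B ∪ S. Then K decomposes as K = [((K^{-1})_{VV})^{-1}]^Δ + [((K^{-1})_{V'V'})^{-1}]^Δ − [((K^{-1})_{SS})^{-1}]^Δ; that is, K is the sum of the inverses of the V- and V'-marginals of K^{-1}, padded with zeros, minus the zero-padded inverse of the S-marginal of K^{-1}. -/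
open Matrix

/-- `[M]^Δ`: the `Δ × Δ` matrix obtained by padding a `V × V` matrix `M` with zeros. -/
def pad {Δ : Type*} (V : Finset Δ) [DecidablePred (· ∈ V)] (M : Matrix V V ℝ) :
    Matrix Δ Δ ℝ :=
  Matrix.of fun i j => if h : i ∈ V ∧ j ∈ V then M ⟨i, h.1⟩ ⟨j, h.2⟩ else 0


section helpers

variable {Δ : Type*} [Fintype Δ] [DecidableEq Δ]

lemma pad_zero_left (V : Finset Δ) (M : Matrix V V ℝ) {i : Δ} (j : Δ) (h : i ∉ V) :
    pad V M i j = 0 := by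
  simp [pad, h]

lemma pad_zero_right (V : Finset Δ) (M : Matrix V V ℝ) (i : Δ) {j : Δ} (h : j ∉ V) :
    pad V M i j = 0 := by
  simp [pad, h]

lemma pad_mem (V : Finset Δ) (M : Matrix V V ℝ) (i j : V) :
    pad V M i j = M i j := by
  simp [pad]

lemma sum_restrict (V : Finset Δ) (f : Δ → ℝ) (h : ∀ k, k ∉ V → f k = 0) :
    ∑ k, f k = ∑ k : V, f k := by
  rw [Finset.sum_coe_sort V f]
  exact (Finset.sum_subset (Finset.subset_univ V) (fun k _ hk => h k hk)).symm

lemma pad_eq_of (V : Finset Δ) (N R : Matrix Δ Δ ℝ)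
    (h1 : ∀ i j, i ∉ V → R i j = 0) (h2 : ∀ i j, j ∉ V → R i j = 0)
    (h3 : ∀ i j, i ∈ V → j ∈ V → (R * N) i j = (1 : Matrix Δ Δ ℝ) i j) :
    pad V ((msub N V V)⁻¹) = R := by
  have key : (msub N V V)⁻¹ = msub R V V := by
    apply Matrix.inv_eq_left_inv
    ext i j
    have := h3 i j i.2 j.2
    rw [Matrix.mul_apply, sum_restrict V _ (fun k hk => by rw [h2 _ _ hk, zero_mul])] at this
    rw [Matrix.mul_apply]
    simp only [msub, Matrix.submatrix_apply]
    rw [this]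
    simp only [Matrix.one_apply, Subtype.ext_iff]
  ext i j
  by_cases hi : i ∈ V
  · by_cases hj : j ∈ V
    · rw [pad_mem V _ ⟨i, hi⟩ ⟨j, hj⟩, key]; rfl
    · rw [pad_zero_right V _ _ hj, h2 _ _ hj]
  · rw [pad_zero_left V _ _ hi, h1 _ _ hi]

lemma msub_unit (W : Finset Δ) (K : Matrix Δ Δ ℝ) (hK : K.PosDef) :
    IsUnit (msub K W W).det := by
  have : (msub K W W).PosDef := hK.submatrix Subtype.val_injective
  exact this.det_pos.ne'.isUnit

lemma padQ_left (W : Finset Δ) (K : Matrix Δ Δ ℝ) (hK : K.PosDef) (i j : Δ)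
    (hi : i ∈ W) (hj : j ∈ W) :
    (pad W ((msub K W W)⁻¹) * K) i j = (1 : Matrix Δ Δ ℝ) i j := by
  have h := congrFun (congrFun (Matrix.nonsing_inv_mul _ (msub_unit W K hK)) ⟨i, hi⟩) ⟨j, hj⟩
  rw [Matrix.mul_apply, sum_restrict W _ (fun k hk => by rw [pad_zero_right W _ _ hk, zero_mul])]
  rw [Matrix.mul_apply] at h
  simp only [Matrix.one_apply, Subtype.mk.injEq] at h ⊢
  rw [← h]
  refine Finset.sum_congr rfl (fun k _ => ?_)
  rw [pad_mem W _ ⟨i, hi⟩ k]; rfl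

lemma padQ_right (W : Finset Δ) (K : Matrix Δ Δ ℝ) (hK : K.PosDef) (i j : Δ)
    (hi : i ∈ W) (hj : j ∈ W) :
    (K * pad W ((msub K W W)⁻¹)) i j = (1 : Matrix Δ Δ ℝ) i j := by
  have h := congrFun (congrFun (Matrix.mul_nonsing_inv _ (msub_unit W K hK)) ⟨i, hi⟩) ⟨j, hj⟩
  rw [Matrix.mul_apply, sum_restrict W _ (fun k hk => by rw [pad_zero_left W _ _ hk, mul_zero])]
  rw [Matrix.mul_apply] at h
  simp only [Matrix.one_apply, Subtype.mk.injEq] at h ⊢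
  rw [← h]
  refine Finset.sum_congr rfl (fun k _ => ?_)
  rw [pad_mem W _ k ⟨j, hj⟩]; rfl

lemma pad_mul_zero (W : Finset Δ) (M : Matrix W W ℝ) (K : Matrix Δ Δ ℝ) (i j : Δ)
    (hi : i ∉ W) : (pad W M * K) i j = 0 := by
  rw [Matrix.mul_apply]
  exact Finset.sum_eq_zero (fun k _ => by rw [pad_zero_left W _ _ hi, zero_mul])

lemma mul_pad_zero (W : Finset Δ) (M : Matrix W W ℝ) (K : Matrix Δ Δ ℝ) (i j : Δ)
    (hj : j ∉ W) : (K * pad W M) i j = 0 := by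
  rw [Matrix.mul_apply]
  exact Finset.sum_eq_zero (fun k _ => by rw [pad_zero_right W _ _ hj, mul_zero])

/-- Schur complement formula, padded with zeros. -/
lemma pad_schur (V W : Finset Δ) (hVW : ∀ i, i ∈ V ↔ i ∉ W) (K : Matrix Δ Δ ℝ) (hK : K.PosDef) :
    pad V ((msub K⁻¹ V V)⁻¹) = K - K * pad W ((msub K W W)⁻¹) * K := by
  have hu : IsUnit K.det := hK.det_pos.ne'.isUnit
  apply pad_eq_of
  · intro i j hi
    have hi : i ∈ W := by by_contra h; exact hi ((hVW i).2 h)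
    have hrow : ∀ k, (K * pad W ((msub K W W)⁻¹)) i k = (1 : Matrix Δ Δ ℝ) i k := by
      intro k
      by_cases hk : k ∈ W
      · exact padQ_right W K hK i k hi hk
      · rw [mul_pad_zero W _ K i k hk, Matrix.one_apply_ne (by rintro rfl; exact hk hi)]
    rw [Matrix.sub_apply, Matrix.mul_apply]
    simp only [hrow]
    rw [← Matrix.mul_apply, one_mul, sub_self]
  · intro i j hj
    have hj : j ∈ W := by by_contra h; exact hj ((hVW j).2 h)
    have hcol : ∀ k, (pad W ((msub K W W)⁻¹) * K) k j = (1 : Matrix Δ Δ ℝ) k j := by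
      intro k
      by_cases hk : k ∈ W
      · exact padQ_left W K hK k j hk hj
      · rw [pad_mul_zero W _ K k j hk, Matrix.one_apply_ne (by rintro rfl; exact hk hj)]
    rw [Matrix.sub_apply, Matrix.mul_assoc, Matrix.mul_apply]
    simp only [hcol]
    rw [← Matrix.mul_apply, mul_one, sub_self]
  · intro i j hi hj
    rw [Matrix.sub_mul, Matrix.mul_assoc (K * _), Matrix.mul_nonsing_inv _ hu, mul_one,
      Matrix.sub_apply, mul_pad_zero W _ K i j ((hVW j).1 hj), sub_zero]

lemma padQ_cross (A B : Finset Δ) (M : Matrix A A ℝ) (K : Matrix Δ Δ ℝ)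
    (h : ∀ i ∈ A, ∀ j ∈ B, K i j = 0) (i j : Δ) (hj : j ∈ B) :
    (pad A M * K) i j = 0 := by
  rw [Matrix.mul_apply]
  refine Finset.sum_eq_zero (fun k _ => ?_)
  by_cases hk : k ∈ A
  · rw [h k hk j hj, mul_zero]
  · rw [pad_zero_right A _ _ hk, zero_mul]

lemma pad_union (A B : Finset Δ) (hAB : Disjoint A B) (K : Matrix Δ Δ ℝ) (hK : K.PosDef)
    (h : ∀ i ∈ A, ∀ j ∈ B, K i j = 0) (h' : ∀ i ∈ B, ∀ j ∈ A, K i j = 0) :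
    pad (A ∪ B) ((msub K (A ∪ B) (A ∪ B))⁻¹)
      = pad A ((msub K A A)⁻¹) + pad B ((msub K B B)⁻¹) := by
  have hd := Finset.disjoint_left.1 hAB
  apply pad_eq_of
  · intro i j hi
    rw [Finset.mem_union, not_or] at hi
    rw [Matrix.add_apply, pad_zero_left A _ _ hi.1, pad_zero_left B _ _ hi.2, add_zero]
  · intro i j hi
    rw [Finset.mem_union, not_or] at hi
    rw [Matrix.add_apply, pad_zero_right A _ _ hi.1, pad_zero_right B _ _ hi.2, add_zero]
  · intro i j hi hj
    rw [Matrix.add_mul, Matrix.add_apply]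
    rcases Finset.mem_union.1 hj with hj | hj
    · rw [padQ_cross B A _ K h' i j hj, add_zero]
      by_cases hi' : i ∈ A
      · exact padQ_left A K hK i j hi' hj
      · rw [pad_mul_zero A _ K i j hi', Matrix.one_apply_ne (by rintro rfl; exact hi' hj)]
    · rw [padQ_cross A B _ K h i j hj, zero_add]
      by_cases hi' : i ∈ B
      · exact padQ_left B K hK i j hi' hj
      · rw [pad_mul_zero B _ K i j hi', Matrix.one_apply_ne (by rintro rfl; exact hi' hj)]

end helpers

/-- A positive definite concentration matrix vanishing on `A × B` decomposes as the
sum of the zero-padded inverses of the `V`- and `V'`-marginals of its inverse minus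
the zero-padded inverse of the `S`-marginal of its inverse, where `V = A ∪ S` and
`V' = B ∪ S`. -/
theorem stmt_11 {Δ : Type*} [Fintype Δ] [DecidableEq Δ]
    (A B S : Finset Δ)
    (hAB : Disjoint A B) (hAS : Disjoint A S) (hBS : Disjoint B S)
    (hunion : A ∪ B ∪ S = Finset.univ)
    (hA : A.Nonempty) (hB : B.Nonempty) (hS : S.Nonempty)
    (K : Matrix Δ Δ ℝ) (hsymm : K.IsSymm) (hK : K.PosDef)
    (hzero : msub K A B = 0)
    (V V' : Finset Δ) (hV : V = A ∪ S) (hV' : V' = B ∪ S) :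
    K = pad V ((msub K⁻¹ V V)⁻¹) + pad V' ((msub K⁻¹ V' V')⁻¹)
        - pad S ((msub K⁻¹ S S)⁻¹) := by
  have hz : ∀ i ∈ A, ∀ j ∈ B, K i j = 0 := fun i hi j hj =>
    congrFun (congrFun hzero ⟨i, hi⟩) ⟨j, hj⟩
  have hz' : ∀ i ∈ B, ∀ j ∈ A, K i j = 0 := fun i hi j hj => by
    rw [← hsymm.apply]; exact hz j hj i hi
  have hcov : ∀ i, i ∈ A ∨ i ∈ B ∨ i ∈ S := fun i => by
    have := Finset.mem_univ i
    rw [← hunion] at this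
    simpa [or_assoc] using this
  rw [Finset.disjoint_left] at hAS hBS
  have hd := Finset.disjoint_left.1 hAB
  rw [pad_schur V B (fun i => by
      have := hcov i; have := @hAS i; have := @hBS i; have := @hd i
      rw [hV, Finset.mem_union]; tauto) K hK,
    pad_schur V' A (fun i => by
      have := hcov i; have := @hAS i; have := @hBS i; have := @hd i
      rw [hV', Finset.mem_union]; tauto) K hK,
    pad_schur S (A ∪ B) (fun i => by
      have := hcov i; have := @hAS i; have := @hBS i; have := @hd i
      rw [Finset.mem_union]; tauto) K hK,
    pad_union A B hAB K hK hz hz', Matrix.mul_add, Matrix.add_mul]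
  abel
end

section
/- Let Δ be a finite index set partitioned into disjoint nonempty subsets A, B, and S, and let K be a symmetric positive definite real matrix indexed by Δ with K_{AB} = 0. Set V := A ∪ S. Then for all i, j ∈ V with i ∈ A or j ∈ A, the (i, j) entry of ((K^{-1})_{VV})^{-1} equals k_{ij}; that is, ((K^{-1})_{VV})^{-1} differs from K_{VV} only on the S × S block. -/
open Matrix

/-- For a positive definite `K` vanishing on `A × B` and `V = A ∪ S`, the matrix
`((K⁻¹)_{VV})⁻¹` differs from `K_{VV}` only on the `S × S` block. -/
theorem stmt_12 {Δ : Type*} [Fintype Δ] [DecidableEq Δ]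
    (A B S : Finset Δ)
    (hAB : Disjoint A B) (hAS : Disjoint A S) (hBS : Disjoint B S)
    (hunion : A ∪ B ∪ S = Finset.univ)
    (hA : A.Nonempty) (hB : B.Nonempty) (hS : S.Nonempty)
    (K : Matrix Δ Δ ℝ) (hsymm : K.IsSymm) (hK : K.PosDef)
    (hzero : msub K A B = 0)
    (V : Finset Δ) (hV : V = A ∪ S) :
    ∀ i j : V, (↑i ∈ A ∨ ↑j ∈ A) → ((msub K⁻¹ V V)⁻¹) i j = K ↑i ↑j := by
  have hMpd : (msub K⁻¹ V V).PosDef := hK.inv.submatrix Subtype.val_injective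
  have hu : IsUnit (msub K⁻¹ V V).det := (Matrix.isUnit_iff_isUnit_det _).1 hMpd.isUnit
  have hKu : IsUnit K.det := (Matrix.isUnit_iff_isUnit_det _).1 hK.isUnit
  have key : ∀ i j : V, (i : Δ) ∈ A → ((msub K⁻¹ V V)⁻¹) i j = K ↑i ↑j := by
    intro i j hi
    have h1 : (fun v : V => K i v) ᵥ* (msub K⁻¹ V V) = Pi.single i 1 := by
      ext l
      have h2 : ∑ v : V, K i v * K⁻¹ v l = ∑ v : Δ, K i v * K⁻¹ v l := by
        rw [Finset.sum_coe_sort V (fun v => K i v * K⁻¹ v l)]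
        apply Finset.sum_subset (Finset.subset_univ _)
        intro x _ hx
        have hxB : x ∈ B := by
          have : x ∈ A ∪ B ∪ S := hunion ▸ Finset.mem_univ x
          simp only [hV, Finset.mem_union] at this hx
          tauto
        have h3 : K i x = 0 := congrFun (congrFun hzero ⟨i, hi⟩) ⟨x, hxB⟩
        rw [h3, zero_mul]
      change ∑ v : V, K i v * K⁻¹ v l = _
      rw [h2, ← Matrix.mul_apply, Matrix.mul_nonsing_inv _ hKu, Matrix.one_apply, Pi.single_apply]
      simp only [← Subtype.ext_iff, eq_comm]
    have h4 := congrArg (fun w => w ᵥ* (msub K⁻¹ V V)⁻¹) h1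
    simp only [Matrix.vecMul_vecMul, Matrix.mul_nonsing_inv _ hu, Matrix.vecMul_one,
      Matrix.single_one_vecMul] at h4
    exact (congrFun h4 j).symm
  intro i j h
  rcases h with h | h
  · exact key i j h
  · have hs : ((msub K⁻¹ V V)⁻¹).IsHermitian := hMpd.inv.isHermitian
    have h5 := hs.apply i j
    rw [star_trivial] at h5
    rw [← h5, key j i h]
    exact hsymm.apply i j
end

section
/- Let Δ be a finite index set partitioned into disjoint nonempty subsets A, B, and S, and let K be a symmetric positive definite real matrix indexed by Δ with K_{AB} = 0. Then the inverse of the S-marginal of K^{-1} satisfies ((K^{-1})_{SS})^{-1} = K_{SS} − K_{SA} (K_{AA})^{-1} K_{AS} − K_{SB} (K_{BB})^{-1} K_{BS}. -/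
open Matrix

theorem msub_mul_split {Δ : Type*} [Fintype Δ] [DecidableEq Δ] (A B S : Finset Δ)
    (hAB : Disjoint A B) (hAS : Disjoint A S) (hBS : Disjoint B S)
    (hunion : A ∪ B ∪ S = Finset.univ) (M N : Matrix Δ Δ ℝ) (X Y : Finset Δ) :
    msub (M * N) X Y = msub M X A * msub N A Y + msub M X B * msub N B Y
      + msub M X S * msub N S Y := by
  ext i j
  simp only [msub, Matrix.submatrix_apply, Matrix.mul_apply, Matrix.add_apply]
  rw [← hunion, Finset.sum_union (Finset.disjoint_union_left.2 ⟨hAS, hBS⟩),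
    Finset.sum_union hAB]
  rw [← Finset.sum_coe_sort A, ← Finset.sum_coe_sort B, ← Finset.sum_coe_sort S]

theorem msub_one_disj {Δ : Type*} [DecidableEq Δ] (X Y : Finset Δ) (h : Disjoint X Y) :
    msub (1 : Matrix Δ Δ ℝ) X Y = 0 := by
  ext i j
  simp only [msub, Matrix.submatrix_apply, Matrix.zero_apply]
  exact Matrix.one_apply_ne (Finset.disjoint_iff_ne.1 h _ i.2 _ j.2)

theorem msub_one_self {Δ : Type*} [DecidableEq Δ] (X : Finset Δ) :
    msub (1 : Matrix Δ Δ ℝ) X X = 1 :=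
  Matrix.submatrix_one _ Subtype.val_injective

theorem msub_inv_mul {Δ : Type*} [Fintype Δ] [DecidableEq Δ] (K : Matrix Δ Δ ℝ) (hK : K.PosDef)
    (X : Finset Δ) : (msub K X X)⁻¹ * msub K X X = 1 := by
  have h : (msub K X X).PosDef := hK.submatrix Subtype.val_injective
  exact Matrix.nonsing_inv_mul _ ((Matrix.isUnit_iff_isUnit_det _).1 h.isUnit)

/-- For a positive definite `K` vanishing on `A × B`, the inverse of the
`S`-marginal of `K⁻¹` is given by the two-sided Schur complement formula. -/
theorem stmt_13 {Δ : Type*} [Fintype Δ] [DecidableEq Δ]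
    (A B S : Finset Δ)
    (hAB : Disjoint A B) (hAS : Disjoint A S) (hBS : Disjoint B S)
    (hunion : A ∪ B ∪ S = Finset.univ)
    (hA : A.Nonempty) (hB : B.Nonempty) (hS : S.Nonempty)
    (K : Matrix Δ Δ ℝ) (hsymm : K.IsSymm) (hK : K.PosDef)
    (hzero : msub K A B = 0) :
    (msub K⁻¹ S S)⁻¹ =
      msub K S S - msub K S A * (msub K A A)⁻¹ * msub K A S
        - msub K S B * (msub K B B)⁻¹ * msub K B S := by
  have hzero' : msub K B A = 0 := by
    ext i j
    have h := congrFun (congrFun hzero j) i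
    have h2 := hsymm.apply (i : Δ) (j : Δ)
    simp only [msub, Matrix.submatrix_apply, Matrix.zero_apply] at h ⊢
    rw [← h2, h]
  have hKL : K * K⁻¹ = 1 :=
    Matrix.mul_nonsing_inv _ ((Matrix.isUnit_iff_isUnit_det _).1 hK.isUnit)
  have split := msub_mul_split A B S hAB hAS hBS hunion K K⁻¹
  rw [hKL] at split
  have e1 := split A S
  have e2 := split B S
  have e3 := split S S
  rw [msub_one_disj _ _ hAS, hzero, Matrix.zero_mul, add_zero] at e1
  rw [msub_one_disj _ _ hBS, hzero', Matrix.zero_mul, zero_add] at e2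
  rw [msub_one_self] at e3
  have f1 : msub K⁻¹ A S = -((msub K A A)⁻¹ * (msub K A S * msub K⁻¹ S S)) := by
    rw [← Matrix.mul_neg, ← eq_neg_of_add_eq_zero_left e1.symm, ← Matrix.mul_assoc,
      msub_inv_mul K hK, Matrix.one_mul]
  have f2 : msub K⁻¹ B S = -((msub K B B)⁻¹ * (msub K B S * msub K⁻¹ S S)) := by
    rw [← Matrix.mul_neg, ← eq_neg_of_add_eq_zero_left e2.symm, ← Matrix.mul_assoc,
      msub_inv_mul K hK, Matrix.one_mul]
  apply Matrix.inv_eq_left_inv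
  rw [e3, f1, f2]
  simp only [Matrix.sub_mul, Matrix.mul_neg, Matrix.mul_assoc]
  abel
end

section
/- Let Δ be a finite index set partitioned into disjoint nonempty subsets A, B, and S, let n be a positive real number, let K be a symmetric positive definite real matrix indexed by Δ with K_{AB} = 0, and let W_{SS} be a symmetric positive definite matrix indexed by S such that n (K^{-1})_{SS} = W_{SS}. Set V := A ∪ S and V' := B ∪ S. Then K = [((K^{-1})_{VV})^{-1}]^Δ + [((K^{-1})_{V'V'})^{-1}]^Δ − n [(W_{SS})^{-1}]^Δ; that is, a concentration matrix vanishing on A × B and whose inverse matches W/n on the separator S decomposes into its two marginal pieces minus the zero-padded scaled inverse of W_{SS}. -/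
open Matrix

/-- Coordinate projection onto `V`. -/
def cproj {Δ : Type*} [DecidableEq Δ] (V : Finset Δ) : Matrix Δ Δ ℝ :=
  Matrix.diagonal fun i => if i ∈ V then 1 else 0

/-- Coordinate restriction to `V`. -/
def cres {Δ : Type*} [DecidableEq Δ] (V : Finset Δ) : Matrix V Δ ℝ :=
  (1 : Matrix Δ Δ ℝ).submatrix (fun i => (i : Δ)) id

lemma cres_mul_apply {Δ : Type*} [Fintype Δ] [DecidableEq Δ] (V : Finset Δ)
    (M : Matrix Δ Δ ℝ) : cres V * M = M.submatrix (fun i : V => (i : Δ)) id := by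
  ext i j
  simp [cres, Matrix.mul_apply, Matrix.one_apply]

lemma msub_eq {Δ : Type*} [Fintype Δ] [DecidableEq Δ] (V : Finset Δ)
    (M : Matrix Δ Δ ℝ) : msub M V V = cres V * M * (cres V)ᵀ := by
  rw [cres_mul_apply]
  ext i j
  simp [cres, msub, Matrix.mul_apply, Matrix.one_apply]

lemma cres_mul_t {Δ : Type*} [Fintype Δ] [DecidableEq Δ] (V : Finset Δ) :
    cres V * (cres V)ᵀ = 1 := by
  have h := msub_eq V (1 : Matrix Δ Δ ℝ)
  rw [Matrix.mul_one] at h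
  rw [← h]
  exact Matrix.submatrix_one _ Subtype.val_injective

lemma cres_t_mul_aux {Δ : Type*} [DecidableEq Δ] (V : Finset Δ) {ι : Type*}
    (M : Matrix V ι ℝ) (i : Δ) (j : ι) :
    ((cres V)ᵀ * M) i j = if h : i ∈ V then M ⟨i, h⟩ j else 0 := by
  rw [Matrix.mul_apply]
  split_ifs with h
  · rw [Finset.sum_eq_single ⟨i, h⟩]
    · simp [cres, Matrix.one_apply]
    · intro b _ hb
      have : (b : Δ) ≠ i := fun e => hb (Subtype.ext e)
      simp [cres, Matrix.one_apply, this]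
    · simp
  · apply Finset.sum_eq_zero
    intro b _
    have : (b : Δ) ≠ i := fun e => h (e ▸ b.2)
    simp [cres, Matrix.one_apply, this]

lemma cres_t_mul {Δ : Type*} [DecidableEq Δ] (V : Finset Δ) :
    (cres V)ᵀ * cres V = cproj V := by
  ext i j
  rw [cres_t_mul_aux]
  by_cases h : i ∈ V <;> simp [cres, cproj, Matrix.diagonal_apply, Matrix.one_apply, h]

lemma pad_eq {Δ : Type*} [Fintype Δ] [DecidableEq Δ] (V : Finset Δ)
    (M : Matrix V V ℝ) : pad V M = (cres V)ᵀ * (M * cres V) := by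
  ext i j
  rw [cres_t_mul_aux]
  by_cases h : i ∈ V
  · have := cres_t_mul_aux V Mᵀ j ⟨i, h⟩
    rw [← Matrix.transpose_mul, Matrix.transpose_apply] at this
    simp [pad, h, this]
  · simp [pad, h]

lemma cproj_mul {Δ : Type*} [Fintype Δ] [DecidableEq Δ] (V U : Finset Δ) :
    cproj V * cproj U = cproj (V ∩ U) := by
  rw [cproj, cproj, cproj, Matrix.diagonal_mul_diagonal]
  congr 1
  ext i
  by_cases h : i ∈ V <;> by_cases h' : i ∈ U <;> simp [h, h']

lemma cproj_empty {Δ : Type*} [DecidableEq Δ] : cproj (∅ : Finset Δ) = 0 := by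
  ext i j
  simp [cproj]

lemma pad_facts {Δ : Type*} [Fintype Δ] [DecidableEq Δ] (V : Finset Δ)
    (M : Matrix Δ Δ ℝ) (hM : M.PosDef) (X : Matrix Δ Δ ℝ) (hX : X = pad V (msub M V V)⁻¹) :
    cproj V * X = X ∧ X * cproj V = X ∧ X * M * cproj V = cproj V ∧
      cproj V * M * X = cproj V := by
  have hpd : (msub M V V).PosDef := hM.submatrix Subtype.val_injective
  have hu : IsUnit (msub M V V).det := (Matrix.isUnit_iff_isUnit_det _).1 hpd.isUnit
  have h1 := Matrix.nonsing_inv_mul _ hu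
  have h2 := Matrix.mul_nonsing_inv _ hu
  have h3 := msub_eq V M
  have h4 := cres_mul_t V
  rw [pad_eq] at hX
  generalize (msub M V V)⁻¹ = N at *
  rw [h3] at h1 h2
  rw [← cres_t_mul, hX]
  refine ⟨?_, ?_, ?_, ?_⟩
  · calc _ = (cres V)ᵀ * (cres V * (cres V)ᵀ) * (N * cres V) := by simp only [Matrix.mul_assoc]
      _ = _ := by rw [h4, Matrix.mul_one]
  · calc _ = (cres V)ᵀ * (N * ((cres V * (cres V)ᵀ) * cres V)) := by simp only [Matrix.mul_assoc]
      _ = _ := by rw [h4, Matrix.one_mul]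
  · calc _ = (cres V)ᵀ * ((N * (cres V * M * (cres V)ᵀ)) * cres V) := by
          simp only [Matrix.mul_assoc]
      _ = _ := by rw [h1, Matrix.one_mul]
  · calc _ = (cres V)ᵀ * (((cres V * M * (cres V)ᵀ) * N) * cres V) := by
          simp only [Matrix.mul_assoc]
      _ = _ := by rw [h2, Matrix.one_mul]

lemma row_fact {Δ : Type*} [Fintype Δ] [DecidableEq Δ] (a v K M X : Matrix Δ Δ ℝ)
    (hKM : K * M = 1) (h0 : a * K * v = a * K) (h : v * M * X = v) : a * K = a * X := by
  calc a * K = a * K * (v * M * X) := by rw [h, h0]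
    _ = (a * K * v) * M * X := by simp only [Matrix.mul_assoc]
    _ = a * (K * M) * X := by rw [h0]; simp only [Matrix.mul_assoc]
    _ = a * X := by rw [hKM, Matrix.mul_one]

lemma col_fact {Δ : Type*} [Fintype Δ] [DecidableEq Δ] (a v K M X : Matrix Δ Δ ℝ)
    (hMK : M * K = 1) (h0 : v * K * a = K * a) (h : X * M * v = v) : K * a = X * a := by
  calc K * a = X * M * v * (K * a) := by rw [h, ← Matrix.mul_assoc, h0]
    _ = X * M * (v * K * a) := by simp only [Matrix.mul_assoc]
    _ = X * (M * K) * a := by rw [h0]; simp only [Matrix.mul_assoc]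
    _ = X * a := by rw [hMK, Matrix.mul_one]

/-- A concentration matrix vanishing on `A × B` and whose inverse matches `W/n` on
the separator `S` decomposes into its two marginal pieces minus the zero-padded
scaled inverse of `W_{SS}`. -/
theorem stmt_14 {Δ : Type*} [Fintype Δ] [DecidableEq Δ]
    (A B S : Finset Δ)
    (hAB : Disjoint A B) (hAS : Disjoint A S) (hBS : Disjoint B S)
    (hunion : A ∪ B ∪ S = Finset.univ)
    (hA : A.Nonempty) (hB : B.Nonempty) (hS : S.Nonempty)
    (n : ℝ) (hn : 0 < n)
    (K : Matrix Δ Δ ℝ) (hsymm : K.IsSymm) (hK : K.PosDef)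
    (hzero : msub K A B = 0)
    (W : Matrix S S ℝ) (hWsymm : W.IsSymm) (hW : W.PosDef)
    (hWS : n • msub K⁻¹ S S = W)
    (V V' : Finset Δ) (hV : V = A ∪ S) (hV' : V' = B ∪ S) :
    K = pad V ((msub K⁻¹ V V)⁻¹) + pad V' ((msub K⁻¹ V' V')⁻¹) - n • pad S W⁻¹ := by
  have hM : K⁻¹.PosDef := hK.inv
  have hu : IsUnit K.det := (Matrix.isUnit_iff_isUnit_det _).1 hK.isUnit
  have hMK := Matrix.nonsing_inv_mul _ hu
  have hKM := Matrix.mul_nonsing_inv _ hu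
  have hXS : n • pad S W⁻¹ = pad S (msub K⁻¹ S S)⁻¹ := by
    have hpd : (msub K⁻¹ S S).PosDef := hM.submatrix Subtype.val_injective
    have hu' : IsUnit (msub K⁻¹ S S).det := (Matrix.isUnit_iff_isUnit_det _).1 hpd.isUnit
    have : W⁻¹ = n⁻¹ • (msub K⁻¹ S S)⁻¹ := by
      apply Matrix.inv_eq_right_inv
      rw [← hWS, Matrix.smul_mul, Matrix.mul_smul, smul_smul, mul_inv_cancel₀ hn.ne', one_smul,
        Matrix.mul_nonsing_inv _ hu']
    rw [this, pad_eq, pad_eq, Matrix.smul_mul, Matrix.mul_smul, smul_smul,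
      mul_inv_cancel₀ hn.ne', one_smul]
  rw [hXS]
  generalize hX : pad V (msub K⁻¹ V V)⁻¹ = X
  generalize hY : pad V' (msub K⁻¹ V' V')⁻¹ = Y
  generalize hZ : pad S (msub K⁻¹ S S)⁻¹ = Z
  obtain ⟨x1, x2, x3, x4⟩ := pad_facts V _ hM X hX.symm
  obtain ⟨y1, y2, y3, y4⟩ := pad_facts V' _ hM Y hY.symm
  obtain ⟨z1, z2, z3, z4⟩ := pad_facts S _ hM Z hZ.symm
  have hz : ∀ i ∈ A, ∀ j ∈ B, K i j = 0 := fun i hi j hj =>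
    congrFun (congrFun hzero ⟨i, hi⟩) ⟨j, hj⟩
  have hz' : ∀ i ∈ A, ∀ j ∈ B, K j i = 0 := fun i hi j hj => by
    rw [← hz i hi j hj]; exact hsymm.apply i j
  have hmem : ∀ i, i ∈ A ∨ i ∈ B ∨ i ∈ S := fun i => by
    have : i ∈ A ∪ B ∪ S := hunion ▸ Finset.mem_univ i
    simpa [or_assoc] using this
  have hAV : cproj A * K * cproj V = cproj A * K := by
    ext i j
    simp only [cproj, Matrix.mul_diagonal, Matrix.diagonal_mul, hV, Finset.mem_union]
    have := hmem j; have := hz i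
    grind
  have hVA : cproj V * K * cproj A = K * cproj A := by
    ext i j
    simp only [cproj, Matrix.mul_diagonal, Matrix.diagonal_mul, hV, Finset.mem_union]
    have := hmem i; have := hz' j
    grind
  have hBV : cproj B * K * cproj V' = cproj B * K := by
    ext i j
    simp only [cproj, Matrix.mul_diagonal, Matrix.diagonal_mul, hV', Finset.mem_union]
    have := hmem j; have := hz' j
    grind
  have hVB : cproj V' * K * cproj B = K * cproj B := by
    ext i j
    simp only [cproj, Matrix.mul_diagonal, Matrix.diagonal_mul, hV', Finset.mem_union]
    have := hmem i; have := hz i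
    grind
  have rA := row_fact _ _ _ _ _ hKM hAV x4
  have cA := col_fact _ _ _ _ _ hMK hVA x3
  have rB := row_fact _ _ _ _ _ hKM hBV y4
  have cB := col_fact _ _ _ _ _ hMK hVB y3
  have hsum : cproj A + cproj B + cproj S = 1 := by
    ext i j
    rw [Finset.disjoint_left] at hAB hAS hBS
    have := hmem i; have := @hAB i; have := @hAS i; have := @hBS i
    simp only [cproj, Matrix.add_apply, Matrix.diagonal_apply, Matrix.one_apply]
    grind
  have left0 : ∀ (P U : Finset Δ) (T : Matrix Δ Δ ℝ), Disjoint P U → cproj U * T = T →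
      cproj P * T = 0 := fun P U T hd hT => by
    rw [← hT, ← Matrix.mul_assoc, cproj_mul, Finset.disjoint_iff_inter_eq_empty.1 hd,
      cproj_empty, Matrix.zero_mul]
  have right0 : ∀ (P U : Finset Δ) (T : Matrix Δ Δ ℝ), Disjoint P U → T * cproj U = T →
      T * cproj P = 0 := fun P U T hd hT => by
    rw [← hT, Matrix.mul_assoc, cproj_mul, Finset.disjoint_iff_inter_eq_empty.1 hd.symm,
      cproj_empty, Matrix.mul_zero]
  have dAV' : Disjoint A V' := by rw [hV', Finset.disjoint_union_right]; exact ⟨hAB, hAS⟩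
  have dBV : Disjoint B V := by rw [hV, Finset.disjoint_union_right]; exact ⟨hAB.symm, hBS⟩
  have e1 : cproj A * (K - (X + Y - Z)) = 0 := by
    rw [Matrix.mul_sub, Matrix.mul_sub, Matrix.mul_add, rA, left0 _ _ _ dAV' y1,
      left0 _ _ _ hAS z1]; simp
  have e2 : cproj B * (K - (X + Y - Z)) = 0 := by
    rw [Matrix.mul_sub, Matrix.mul_sub, Matrix.mul_add, rB, left0 _ _ _ dBV x1,
      left0 _ _ _ hBS z1]; simp
  have e3 : (K - (X + Y - Z)) * cproj A = 0 := by
    rw [Matrix.sub_mul, Matrix.sub_mul, Matrix.add_mul, cA, right0 _ _ _ dAV' y2,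
      right0 _ _ _ hAS z2]; simp
  have e4 : (K - (X + Y - Z)) * cproj B = 0 := by
    rw [Matrix.sub_mul, Matrix.sub_mul, Matrix.add_mul, cB, right0 _ _ _ dBV x2,
      right0 _ _ _ hBS z2]; simp
  have sV : cproj S * cproj V = cproj S := by
    rw [cproj_mul, hV, Finset.inter_eq_left.2 Finset.subset_union_right]
  have sV' : cproj S * cproj V' = cproj S := by
    rw [cproj_mul, hV', Finset.inter_eq_left.2 Finset.subset_union_right]
  have key : ∀ T : Matrix Δ Δ ℝ, ∀ U : Finset Δ, cproj S * cproj U = cproj S →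
      cproj U * K⁻¹ * T = cproj U → cproj S * K⁻¹ * T = cproj S := fun T U h h' => by
    calc cproj S * K⁻¹ * T = cproj S * cproj U * K⁻¹ * T := by rw [h]
      _ = cproj S * (cproj U * K⁻¹ * T) := by simp only [Matrix.mul_assoc]
      _ = cproj S := by rw [h', h]
  have sX := key X V sV x4
  have sY := key Y V' sV' y4
  -- the defect vanishes after multiplying by the covariance on both sides
  have hmid : cproj S * K⁻¹ * (K - (X + Y - Z)) * K⁻¹ * cproj S = 0 := by
    rw [Matrix.mul_sub, Matrix.mul_sub, Matrix.mul_add, sX, sY, z4,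
      Matrix.mul_assoc (cproj S) K⁻¹ K, hMK]
    simp
  rw [← sub_eq_zero]
  generalize K - (X + Y - Z) = E at *
  have hl : E = cproj S * E := by
    have : (cproj A + cproj B + cproj S) * E = E := by rw [hsum, Matrix.one_mul]
    rw [Matrix.add_mul, Matrix.add_mul, e1, e2] at this
    simpa using this.symm
  have hr : E = E * cproj S := by
    have : E * (cproj A + cproj B + cproj S) = E := by rw [hsum, Matrix.mul_one]
    rw [Matrix.mul_add, Matrix.mul_add, e3, e4] at this
    simpa using this.symm
  have hl2 : E = Z * K⁻¹ * E := by
    calc E = (Z * K⁻¹ * cproj S) * E := by rw [z3]; exact hl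
      _ = Z * K⁻¹ * (cproj S * E) := by simp only [Matrix.mul_assoc]
      _ = _ := by rw [← hl]
  have hr2 : E = E * K⁻¹ * Z := by
    calc E = E * (cproj S * K⁻¹ * Z) := by rw [z4]; exact hr
      _ = (E * cproj S) * K⁻¹ * Z := by simp only [Matrix.mul_assoc]
      _ = _ := by rw [← hr]
  calc E = Z * K⁻¹ * (E * K⁻¹ * Z) := by rw [← hr2]; exact hl2
    _ = (Z * cproj S) * K⁻¹ * (E * K⁻¹ * (cproj S * Z)) := by rw [z2, z1]
    _ = Z * (cproj S * K⁻¹ * E * K⁻¹ * cproj S) * Z := by simp only [Matrix.mul_assoc]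
    _ = 0 := by rw [hmid]; simp
end

section
/- Let K be a symmetric positive definite real matrix indexed by a finite set Δ, let δ ∈ Δ, set Q1 := Δ \ {δ}, and suppose Q ⊆ Q1 and Q2 := Q1 \ Q satisfy k_{iδ} = 0 for all i ∈ Q2. Define K' to be the matrix indexed by Q1 that agrees with K_{Q1Q1} outside the Q × Q block and whose Q × Q block equals K_{QQ} − (k_{δδ})^{-1} K_{Qδ} K_{δQ}. Then K' = ((K^{-1})_{Q1Q1})^{-1}; that is, when the column of δ vanishes off Q, the global Schur-complement elimination of δ coincides with the local rank-one update performed only on the Q × Q block. -/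
open Matrix

/-- When the column of `δ` vanishes off `Q`, the global Schur-complement elimination
of `δ` coincides with the local rank-one update performed only on the `Q × Q` block. -/
theorem stmt_15 {Δ : Type*} [Fintype Δ] [DecidableEq Δ]
    (K : Matrix Δ Δ ℝ) (hsymm : K.IsSymm) (hK : K.PosDef)
    (δ : Δ) (Q1 Q Q2 : Finset Δ) (hQ1 : Q1 = Finset.univ.erase δ)
    (hQ : Q ⊆ Q1) (hQ2 : Q2 = Q1 \ Q) (hzero : ∀ i ∈ Q2, K i δ = 0)
    (K' : Matrix Q1 Q1 ℝ)
    (hout : ∀ i j : Q1, ¬(↑i ∈ Q ∧ ↑j ∈ Q) → K' i j = K ↑i ↑j)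
    (hin : ∀ i j : Q1, ↑i ∈ Q → ↑j ∈ Q →
      K' i j = K ↑i ↑j - (K δ δ)⁻¹ * (K ↑i δ * K δ ↑j)) :
    K' = (msub K⁻¹ Q1 Q1)⁻¹ := by
  have hd : K δ δ ≠ 0 := (hK.diag_pos).ne'
  have hdet : IsUnit K.det := (Matrix.isUnit_iff_isUnit_det K).1 hK.isUnit
  have hmul : K * K⁻¹ = 1 := Matrix.mul_nonsing_inv K hdet
  have hform : ∀ i j : Q1, K' i j = K ↑i ↑j - (K δ δ)⁻¹ * (K ↑i δ * K δ ↑j) := by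
    intro i j
    have hz : ∀ l : Q1, (l : Δ) ∉ Q → K l δ = 0 := fun l hl =>
      hzero l (by rw [hQ2]; exact Finset.mem_sdiff.2 ⟨l.2, hl⟩)
    by_cases hi : (i : Δ) ∈ Q
    · by_cases hj : (j : Δ) ∈ Q
      · exact hin i j hi hj
      · have h0 : K δ j = 0 := by rw [← hsymm.apply]; exact hz j hj
        rw [hout i j (fun h => hj h.2), h0]; ring
    · rw [hout i j (fun h => hi h.1), hz i hi]; ring
  have hsumQ : ∀ f : Δ → ℝ, f δ = 0 → ∑ l ∈ Q1, f l = ∑ l, f l := by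
    intro f hf
    rw [hQ1]
    exact Finset.sum_erase _ hf
  symm
  apply Matrix.inv_eq_left_inv
  ext i j
  have hent : ∀ a b : Δ, ∑ l, K a l * K⁻¹ l b = (1 : Matrix Δ Δ ℝ) a b := by
    intro a b
    rw [← hmul, Matrix.mul_apply]
  have hjδ : δ ≠ (j : Δ) := by
    have h : (j : Δ) ∈ Finset.univ.erase δ := hQ1 ▸ j.2
    exact (Finset.ne_of_mem_erase h).symm
  rw [Matrix.mul_apply]
  simp only [hform, msub, Matrix.submatrix_apply]
  rw [Finset.sum_coe_sort Q1
    (fun l => (K ↑i l - (K δ δ)⁻¹ * (K ↑i δ * K δ l)) * K⁻¹ l ↑j)]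
  have hsum : ∑ l ∈ Q1, (K ↑i l - (K δ δ)⁻¹ * (K ↑i δ * K δ l)) * K⁻¹ l ↑j
      = ∑ l, (K ↑i l - (K δ δ)⁻¹ * (K ↑i δ * K δ l)) * K⁻¹ l ↑j := by
    refine hsumQ _ ?_
    field_simp
    ring
  rw [hsum]
  have hsplit : ∑ l, (K ↑i l - (K δ δ)⁻¹ * (K ↑i δ * K δ l)) * K⁻¹ l ↑j
      = ∑ l, K ↑i l * K⁻¹ l ↑j - (K δ δ)⁻¹ * K ↑i δ * ∑ l, K δ l * K⁻¹ l ↑j := by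
    rw [Finset.mul_sum, ← Finset.sum_sub_distrib]
    exact Finset.sum_congr rfl fun l _ => by ring
  rw [hsplit, hent, hent, Matrix.one_apply_ne hjδ]
  rw [mul_zero, sub_zero]
  by_cases hij : i = j
  · rw [hij, Matrix.one_apply_eq, Matrix.one_apply_eq]
  · rw [Matrix.one_apply_ne hij, Matrix.one_apply_ne (fun h => hij (Subtype.ext h))]
end
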